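/- Let Φ be a rich sequence, and let H ⊆ G_Φ(T) be a clopen subset satisfying H = H·H⁻¹ (products of all composable pairs) and B_Φ(T) ⊆ H. Then H contains [Eⁿ]_G for some n ∈ ℕ. -/

import Mathlib

open FirstOrder FirstOrder.Language

variable {L : FirstOrder.Language}

/-- A sequence `Φ = (φ_n(x_{<n}, y))_n` of formulas (with `y` a single variable) is
rich if every formula `φ(x_{<k}, y)` appears, up to dummy variables, as `φ_n` for some
`n ≥ k`. -/
def IsRich (Φ : ∀ n : ℕ, L.Formula (Fin n ⊕ Unit)) : Prop :=
  ∀ (k : ℕ) (ψ : L.Formula (Fin k ⊕ Unit)),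
    ∃ (n : ℕ) (h : k ≤ n), Φ n = ψ.relabel (Sum.map (Fin.castLE h) id)

/-- `a_{<n}` realizes `D_{Φ,n}`, i.e.
`⋀_{k<n} ∀y [φ_k(a_{<k}, y) → φ_k(a_{<k}, a_k)]` holds in `M`. -/
def RealizesDn (Φ : ∀ n : ℕ, L.Formula (Fin n ⊕ Unit)) {M : Type*} [L.Structure M]
    (n : ℕ) (a : Fin n → M) : Prop :=
  ∀ (k : Fin n) (y : M),
    (Φ k).Realize (Sum.elim (fun i : Fin k => a (Fin.castLE k.2.le i)) (fun _ => y)) →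
    (Φ k).Realize (Sum.elim (fun i : Fin k => a (Fin.castLE k.2.le i)) (fun _ => a k))

/-- The sequence `a : ℕ → M` realizes the partial type `D_Φ = ⋀_n D_{Φ,n}(x_{<n})`. -/
def RealizesD (Φ : ∀ n : ℕ, L.Formula (Fin n ⊕ Unit)) {M : Type*} [L.Structure M]
    (a : ℕ → M) : Prop :=
  ∀ (k : ℕ) (y : M),
    (Φ k).Realize (Sum.elim (fun i : Fin k => a i) (fun _ => y)) →
    (Φ k).Realize (Sum.elim (fun i : Fin k => a i) (fun _ => a k))

/-- The (Boolean-valued) complete type of a tuple `a : α → M`: the set of formulas in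
variables `α` satisfied by `a`, viewed as a point of the Stone-type space
`L.Formula α → Bool` (with the product topology, `Bool` discrete). -/
noncomputable def tpFun {M : Type*} [L.Structure M] {α : Type*} (a : α → M) :
    L.Formula α → Bool :=
  fun φ => @decide (φ.Realize a) (Classical.propDecidable _)


/-- `S_{kD_Φ}(T)`: the space of types of `k`-tuples of realizations of `D_Φ`. -/
def SkD (T : L.Theory) (Φ : ∀ n : ℕ, L.Formula (Fin n ⊕ Unit)) (k : ℕ) :
    Set (L.Formula (Fin k × ℕ) → Bool) :=
  {p | ∃ (M : Type) (_ : L.Structure M) (_ : T.Model M) (_ : Countable M)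
    (a : Fin k → ℕ → M), (∀ i, RealizesD Φ (a i)) ∧ p = tpFun (fun q => a q.1 q.2)}

/-- `S_{kD_{Φ,n}}(T)`: the space of types of `k`-tuples of realizations of `D_{Φ,n}`. -/
def SkDn (T : L.Theory) (Φ : ∀ n : ℕ, L.Formula (Fin n ⊕ Unit)) (k n : ℕ) :
    Set (L.Formula (Fin k × Fin n) → Bool) :=
  {p | ∃ (M : Type) (_ : L.Structure M) (_ : T.Model M) (_ : Countable M)
    (a : Fin k → Fin n → M), (∀ i, RealizesDn Φ n (a i)) ∧ p = tpFun (fun q => a q.1 q.2)}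

/-- `G_Φ^{[k]}(T)`: the set of types `tp(a⁰, …, a^{k-1})` where all `a^i` are
enumerations of one common countable model of `T` and each realizes `D_Φ`. -/
def GPhiK (T : L.Theory) (Φ : ∀ n : ℕ, L.Formula (Fin n ⊕ Unit)) (k : ℕ) :
    Set (L.Formula (Fin k × ℕ) → Bool) :=
  {p | ∃ (M : Type) (_ : L.Structure M) (_ : T.Model M) (_ : Countable M)
    (a : Fin k → ℕ → M), (∀ i, Function.Surjective (a i)) ∧ (∀ i, RealizesD Φ (a i)) ∧
    p = tpFun (fun q => a q.1 q.2)}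

/-- The restriction map `π_{k,n} : tp(a⁰, …, a^{k-1}) ↦ tp(a⁰_{<n}, …, a^{k-1}_{<n})`. -/
def resMap (k n : ℕ) :
    (L.Formula (Fin k × ℕ) → Bool) → (L.Formula (Fin k × Fin n) → Bool) :=
  fun p φ => p (φ.relabel fun q => (q.1, (q.2 : ℕ)))

/-- `B_Φ(T) = S_{D_Φ}(T)`: the set of complete types extending `D_Φ`. -/
def BPhi (T : L.Theory) (Φ : ∀ n : ℕ, L.Formula (Fin n ⊕ Unit)) :
    Set (L.Formula ℕ → Bool) :=
  {p | ∃ (M : Type) (_ : L.Structure M) (_ : T.Model M) (_ : Countable M) (a : ℕ → M),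
    RealizesD Φ a ∧ p = tpFun a}

/-- `G_Φ(T)`: the set of types `tp(a,b)` where `a` and `b` are enumerations of one
common countable model of `T` and both realize `D_Φ`. -/
def GPhi (T : L.Theory) (Φ : ∀ n : ℕ, L.Formula (Fin n ⊕ Unit)) :
    Set (L.Formula (ℕ ⊕ ℕ) → Bool) :=
  {p | ∃ (M : Type) (_ : L.Structure M) (_ : T.Model M) (_ : Countable M) (a b : ℕ → M),
    Function.Surjective a ∧ Function.Surjective b ∧
    RealizesD Φ a ∧ RealizesD Φ b ∧ p = tpFun (Sum.elim a b)}

/-- The source map `tp(a,b) ↦ tp(b)`. -/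
def srcMap : (L.Formula (ℕ ⊕ ℕ) → Bool) → (L.Formula ℕ → Bool) :=
  fun p φ => p (φ.relabel Sum.inr)

/-- The target map `tp(a,b) ↦ tp(a)`. -/
def tgtMap : (L.Formula (ℕ ⊕ ℕ) → Bool) → (L.Formula ℕ → Bool) :=
  fun p φ => p (φ.relabel Sum.inl)


/-- The formula `x_i = y_i` in the variables `ℕ ⊕ ℕ`. -/
def eqFml (i : ℕ) : L.Formula (ℕ ⊕ ℕ) :=
  Term.equal (Term.var (Sum.inl i)) (Term.var (Sum.inr i))

/-- `[Eⁿ]_G`: the set of types in `G_Φ(T)` containing the formula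
`Eⁿ(x,y) : x_{<n} = y_{<n}`. -/
def EnSet (T : L.Theory) (Φ : ∀ n : ℕ, L.Formula (Fin n ⊕ Unit)) (n : ℕ) :
    Set (L.Formula (ℕ ⊕ ℕ) → Bool) :=
  {p ∈ GPhi T Φ | ∀ i < n, p (eqFml i) = true}


/-- The set of products `A · A'` of all composable pairs from `A` and `A'`:
`tp(a,b) · tp(b,c) = tp(a,c)` for enumerations `a, b, c` of a common countable model,
each realizing `D_Φ`. -/
def prodSet (T : L.Theory) (Φ : ∀ n : ℕ, L.Formula (Fin n ⊕ Unit))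
    (A A' : Set (L.Formula (ℕ ⊕ ℕ) → Bool)) : Set (L.Formula (ℕ ⊕ ℕ) → Bool) :=
  {r | ∃ (M : Type) (_ : L.Structure M) (_ : T.Model M) (_ : Countable M)
    (a b c : ℕ → M),
    Function.Surjective a ∧ Function.Surjective b ∧ Function.Surjective c ∧
    RealizesD Φ a ∧ RealizesD Φ b ∧ RealizesD Φ c ∧
    tpFun (Sum.elim a b) ∈ A ∧ tpFun (Sum.elim b c) ∈ A' ∧ r = tpFun (Sum.elim a c)}

/-- The set of inverses `A⁻¹ = {g⁻¹ : g ∈ A}`, where `tp(a,b)⁻¹ = tp(b,a)`. -/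
def invSet (T : L.Theory) (Φ : ∀ n : ℕ, L.Formula (Fin n ⊕ Unit))
    (A : Set (L.Formula (ℕ ⊕ ℕ) → Bool)) : Set (L.Formula (ℕ ⊕ ℕ) → Bool) :=
  {r | ∃ (M : Type) (_ : L.Structure M) (_ : T.Model M) (_ : Countable M)
    (a b : ℕ → M),
    Function.Surjective a ∧ Function.Surjective b ∧
    RealizesD Φ a ∧ RealizesD Φ b ∧
    tpFun (Sum.elim a b) ∈ A ∧ r = tpFun (Sum.elim b a)}

/-- `B_Φ(T)`, identified inside `S_{2×ℕ}(T)` with the set of types `tp(a,a)`. -/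
def basePairs (T : L.Theory) (Φ : ∀ n : ℕ, L.Formula (Fin n ⊕ Unit)) :
    Set (L.Formula (ℕ ⊕ ℕ) → Bool) :=
  {r | ∃ (M : Type) (_ : L.Structure M) (_ : T.Model M) (_ : Countable M) (a : ℕ → M),
    Function.Surjective a ∧ RealizesD Φ a ∧ r = tpFun (Sum.elim a a)}

theorem tpFun_eq_true {M : Type*} [L.Structure M] {α : Type*} (a : α → M) (φ : L.Formula α) :
    tpFun a φ = true ↔ φ.Realize a := by
  unfold tpFun
  exact @decide_eq_true_iff _ (Classical.propDecidable _)

/-- Elements of the range of a realization of `D_Φ` witness every satisfiable formula. -/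
theorem RealizesD.exists_witness {Φ : ∀ n : ℕ, L.Formula (Fin n ⊕ Unit)} (hΦ : IsRich Φ)
    {M : Type*} [L.Structure M] {c : ℕ → M} (hc : RealizesD Φ c) {n : ℕ}
    (ψ : L.Formula (Fin n ⊕ Unit)) (k : Fin n → ℕ) (y : M)
    (h : ψ.Realize (Sum.elim (fun i => c (k i)) (fun _ => y))) :
    ∃ m, ψ.Realize (Sum.elim (fun i => c (k i)) (fun _ => c m)) := by
  obtain ⟨K, hK⟩ : ∃ K, ∀ i, k i < K :=
    ⟨Finset.univ.sup k + 1, fun i => Nat.lt_succ_of_le (Finset.le_sup (Finset.mem_univ i))⟩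
  obtain ⟨m, hm, hΦm⟩ := hΦ K (ψ.relabel (Sum.map (fun i => (⟨k i, hK i⟩ : Fin K)) id))
  have key : ∀ z : M, (Φ m).Realize (Sum.elim (fun i : Fin m => c i) (fun _ => z)) ↔
      ψ.Realize (Sum.elim (fun i => c (k i)) (fun _ => z)) := by
    intro z
    rw [hΦm, Formula.realize_relabel, Formula.realize_relabel]
    have : ((Sum.elim (fun i : Fin m => c i) (fun _ : Unit => z)) ∘ Sum.map (Fin.castLE hm) id) ∘
        Sum.map (fun i => (⟨k i, hK i⟩ : Fin K)) id =
        Sum.elim (fun i => c (k i)) (fun _ => z) := by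
      funext j
      rcases j with j | j <;> rfl
    rw [this]
  exact ⟨m, (key _).1 (hc m y ((key y).2 h))⟩

/-- The range of a realization of `D_Φ` as an elementary substructure. -/
theorem RealizesD.exists_elementary {Φ : ∀ n : ℕ, L.Formula (Fin n ⊕ Unit)} (hΦ : IsRich Φ)
    {M : Type*} [L.Structure M] {c : ℕ → M} (hc : RealizesD Φ c) :
    ∃ S : L.ElementarySubstructure M, ∀ x, x ∈ S ↔ x ∈ Set.range c := by
  let S₀ : L.Substructure M :=
    { carrier := Set.range c
      fun_mem := by
        intro n f x hx
        choose k hk using hx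
        obtain ⟨m, hm⟩ := hc.exists_witness hΦ
          (Term.equal (Term.func f (fun i => Term.var (Sum.inl i))) (Term.var (Sum.inr ())))
          k (Structure.funMap f x) (by simp [Formula.realize_equal, Term.realize, hk])
        refine ⟨m, ?_⟩
        simp only [Formula.realize_equal, Term.realize, Sum.elim_inl, Sum.elim_inr, hk] at hm
        exact hm.symm }
  refine ⟨⟨S₀, S₀.isElementary_of_exists ?_⟩, fun x => Iff.rfl⟩
  intro n φ x a h
  choose k hk using fun i => (x i).2
  let g : Empty ⊕ Fin (n + 1) → Fin n ⊕ Unit :=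
    Sum.elim Empty.elim (Fin.snoc (α := fun _ => Fin n ⊕ Unit) Sum.inl (Sum.inr ()))
  have key : ∀ z : M, (φ.toFormula.relabel g).Realize
      (Sum.elim (fun i => c (k i)) (fun _ => z)) ↔
      φ.Realize default (Fin.snoc ((↑) ∘ x) z : _ → M) := by
    intro z
    rw [Formula.realize_relabel, BoundedFormula.realize_toFormula]
    have h1 : ((Sum.elim (fun i => c (k i)) (fun _ : Unit => z)) ∘ g) ∘ Sum.inr =
        (Fin.snoc ((↑) ∘ x) z : Fin (n + 1) → M) := by
      funext j
      refine Fin.lastCases ?_ (fun i => ?_) j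
      · simp [g]
      · simp [g, hk]
    rw [h1, Subsingleton.elim (_ ∘ Sum.inl) default]
  obtain ⟨m, hm⟩ := hc.exists_witness hΦ _ k a ((key a).2 h)
  exact ⟨⟨c m, m, rfl⟩, (key _).1 hm⟩

/-- For a realization `c` of `D_Φ` in any model, `tp(c,c)` lies in the base. -/
theorem tpFun_mem_basePairs {T : L.Theory} {Φ : ∀ n : ℕ, L.Formula (Fin n ⊕ Unit)}
    (hΦ : IsRich Φ) {M : Type} [L.Structure M] [T.Model M] {c : ℕ → M} (hc : RealizesD Φ c) :
    tpFun (Sum.elim c c) ∈ basePairs T Φ := by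
  obtain ⟨S, hS⟩ := hc.exists_elementary hΦ
  let d : ℕ → S := fun i => ⟨c i, (hS _).2 ⟨i, rfl⟩⟩
  have hd : Function.Surjective d := by
    rintro ⟨x, hx⟩
    obtain ⟨i, rfl⟩ := (hS _).1 hx
    exact ⟨i, rfl⟩
  refine ⟨S, inferInstance, inferInstance, hd.countable, d, hd, ?_, ?_⟩
  · have key : ∀ (k : ℕ) (z : S), (Φ k).Realize (Sum.elim (fun i : Fin k => d i) (fun _ => z)) ↔
        (Φ k).Realize (Sum.elim (fun i : Fin k => c i) (fun _ => (z : M))) := by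
      intro k z
      rw [← S.subtype.map_formula]
      have : S.subtype ∘ Sum.elim (fun i : Fin k => d i) (fun _ : Unit => z) =
          Sum.elim (fun i : Fin k => c i) (fun _ => (z : M)) := by
        funext j
        rcases j with j | j <;> rfl
      rw [this]
    intro k y hy
    exact (key k _).2 (hc k y ((key k y).1 hy))
  · funext φ
    have : Sum.elim c c = S.subtype ∘ Sum.elim d d := by
      funext j
      rcases j with j | j <;> rfl
    rw [Bool.eq_iff_iff, tpFun_eq_true, tpFun_eq_true, this, S.subtype.map_formula]

theorem clopen_aux (T : L.Theory)
    (Φ : ∀ n : ℕ, L.Formula (Fin n ⊕ Unit)) (hΦ : IsRich Φ)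
    (H : Set (L.Formula (ℕ ⊕ ℕ) → Bool))
    (hopen : ∃ U, IsOpen U ∧ H = U ∩ GPhi T Φ)
    (hbase : basePairs T Φ ⊆ H) :
    ∃ n : ℕ, EnSet T Φ n ⊆ H := by
  obtain ⟨U, hU, hHU⟩ := hopen
  by_contra hcon
  push Not at hcon
  simp only [Set.not_subset] at hcon
  choose p hp hpH using hcon
  have hpG : ∀ n, p n ∈ GPhi T Φ := fun n => (hp n).1
  have hpE : ∀ n, ∀ i < n, p n (eqFml i) = true := fun n => (hp n).2
  choose M instM hM hMc a b ha hb hDa hDb hpab using hpG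
  have hne : ∀ n, Nonempty (M n) := fun n => ⟨a n 0⟩
  let u : Ultrafilter ℕ := Filter.hyperfilter ℕ
  let N := (u : Filter ℕ).Product M
  let c : ℕ → N := fun i => ((fun n => a n i : ∀ n, M n) : (u : Filter ℕ).Product M)
  let d : ℕ → N := fun i => ((fun n => b n i : ∀ n, M n) : (u : Filter ℕ).Product M)
  have hcd : c = d := by
    funext i
    refine Quotient.sound' ?_
    have : ∀ᶠ n in (u : Filter ℕ), i < n := by
      have : ∀ᶠ n in Filter.cofinite, i < n := by
        rw [Nat.cofinite_eq_atTop]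
        exact Filter.eventually_gt_atTop i
      exact Filter.hyperfilter_le_cofinite this
    refine this.mono fun n hn => ?_
    have h := hpE n i hn
    rw [hpab n] at h
    rw [tpFun_eq_true, eqFml, Formula.realize_equal] at h
    exact h
  have hNT : T.Model N := by
    refine ⟨fun φ hφ => ?_⟩
    refine (Ultraproduct.sentence_realize (M := M) (u := u) φ).2 ?_
    exact Filter.Eventually.of_forall fun n => (hM n).realize_of_mem φ hφ
  have hDc : RealizesD Φ c := by
    intro k y
    induction y using Quotient.inductionOn' with
    | h m =>
    have key : ∀ z : ∀ n, M n,
        (Φ k).Realize (Sum.elim (fun i : Fin k => c i)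
          (fun _ : Unit => (z : (u : Filter ℕ).Product M))) ↔
        ∀ᶠ n in (u : Filter ℕ),
          (Φ k).Realize (Sum.elim (fun i : Fin k => a n i) (fun _ : Unit => z n)) := by
      intro z
      have h := Ultraproduct.realize_formula_cast (M := M) (u := u) (Φ k)
        (Sum.elim (fun i : Fin k => fun n => a n i) (fun _ : Unit => z))
      refine Iff.trans (iff_of_eq (congrArg _ ?_)) (h.trans
        (Filter.eventually_congr (Filter.Eventually.of_forall fun n =>
          iff_of_eq (congrArg _ ?_))))
      · funext j
        rcases j with j | j <;> rfl
      · funext j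
        rcases j with j | j <;> rfl
    intro h
    exact (key _).2 (((key m).1 h).mono fun n hn => hDa n k _ hn)
  have hq : tpFun (Sum.elim c d) ∈ U := by
    have := hbase (tpFun_mem_basePairs (T := T) hΦ hDc)
    rw [hHU] at this
    rw [← hcd]
    exact this.1
  have htend : Filter.Tendsto p (u : Filter ℕ) (nhds (tpFun (Sum.elim c d))) := by
    rw [tendsto_pi_nhds]
    intro φ
    rw [nhds_discrete, Filter.tendsto_pure]
    have key : ∀ ψ : L.Formula (ℕ ⊕ ℕ), ψ.Realize (Sum.elim c d) ↔
        ∀ᶠ n in (u : Filter ℕ), ψ.Realize (Sum.elim (a n) (b n)) := by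
      intro ψ
      have h := Ultraproduct.realize_formula_cast (M := M) (u := u) ψ
        (Sum.elim (fun i => fun n => a n i) (fun i => fun n => b n i))
      refine Iff.trans (iff_of_eq (congrArg _ ?_)) (h.trans
        (Filter.eventually_congr (Filter.Eventually.of_forall fun n =>
          iff_of_eq (congrArg _ ?_))))
      · funext j
        rcases j with j | j <;> rfl
      · funext j
        rcases j with j | j <;> rfl
    by_cases hφ : φ.Realize (Sum.elim c d)
    · refine ((key φ).1 hφ).mono fun n hn => ?_
      rw [hpab n]
      rw [(tpFun_eq_true _ _).2 hn, (tpFun_eq_true _ _).2 hφ]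
    · have h2 := mt (key φ).2 hφ
      rw [← Ultrafilter.eventually_not] at h2
      refine h2.mono fun n hn => ?_
      rw [hpab n]
      rw [Bool.eq_iff_iff, tpFun_eq_true, tpFun_eq_true]
      exact iff_of_false hn hφ
  obtain ⟨n, hn⟩ := (htend.eventually (hU.mem_nhds hq)).exists
  exact hpH n (hHU ▸ ⟨hn, (hp n).1⟩)

/-- STATEMENT 18: if `H ⊆ G_Φ(T)` is clopen (in `G_Φ(T)`), satisfies `H = H · H⁻¹`, and
contains `B_Φ(T)`, then `H` contains `[Eⁿ]_G` for some `n`. -/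
theorem clopen_subgroupoid_contains_En {L : FirstOrder.Language}
    [Countable L.Symbols] (T : L.Theory) (hT : T.IsComplete)
    (Φ : ∀ n : ℕ, L.Formula (Fin n ⊕ Unit)) (hΦ : IsRich Φ)
    (H : Set (L.Formula (ℕ ⊕ ℕ) → Bool)) (hsub : H ⊆ GPhi T Φ)
    (hopen : ∃ U, IsOpen U ∧ H = U ∩ GPhi T Φ)
    (hclosed : ∃ C, IsClosed C ∧ H = C ∩ GPhi T Φ)
    (hmul : prodSet T Φ H (invSet T Φ H) = H)
    (hbase : basePairs T Φ ⊆ H) :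
    ∃ n : ℕ, EnSet T Φ n ⊆ H := by
  exact clopen_aux T Φ hΦ H hopen hbase
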